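/- Let Γ be a finite extensive-form game with perfect recall, let β be a behavioral strategy profile, let i ∈ N and j ∈ M_i. Then: (i) if S^i(I_i^q|β) > 0 for some q ∈ M(I_i^j), then S^i(I_i^j|β) > 0; and (ii) if S^i(I_i^j|β) = 0, then S^i(I_i^q|β) = 0 for all q ∈ M(I_i^j). -/

import Mathlib

open scoped Classical

noncomputable section

/-- A finite extensive-form game.  Actions are labelled by natural numbers drawn from the
finite pool `actFinset`; a history is the list of actions taken so far; players are `Fin n`
and `P h = none` means that the chance player moves after `h`.  The information sets of
player `i` are `Info i j` for `j < m i`, and `infoIdx h` is the index of the information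
set containing a nonterminal history `h` at which some player moves.  Payoffs `u i h` are
relevant on terminal histories. -/
structure EFG where
  n : ℕ
  actFinset : Finset ℕ
  H : Finset (List ℕ)
  P : List ℕ → Option (Fin n)
  fc : List ℕ → ℕ → ℝ
  m : Fin n → ℕ
  Info : Fin n → ℕ → Finset (List ℕ)
  infoIdx : List ℕ → ℕ
  u : Fin n → List ℕ → ℝ
  empty_mem : ([] : List ℕ) ∈ H
  prefixClosed : ∀ h ∈ H, ∀ h' : List ℕ, h' <+: h → h' ∈ H
  act_mem : ∀ (h : List ℕ) (a : ℕ), h ++ [a] ∈ H → a ∈ actFinset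
  fc_nonneg : ∀ h a, 0 ≤ fc h a
  fc_sum : ∀ h ∈ H, P h = none → (∃ a, h ++ [a] ∈ H) →
    ∑ a ∈ actFinset.filter (fun a => h ++ [a] ∈ H), fc h a = 1
  info_spec : ∀ (i : Fin n) (j : ℕ) (h : List ℕ), j < m i →
    (h ∈ Info i j ↔ h ∈ H ∧ P h = some i ∧ (∃ a, h ++ [a] ∈ H) ∧ infoIdx h = j)
  infoIdx_lt : ∀ (i : Fin n), ∀ h ∈ H, P h = some i → (∃ a, h ++ [a] ∈ H) → infoIdx h < m i
  info_nonempty : ∀ (i : Fin n) (j : ℕ), j < m i → (Info i j).Nonempty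
  info_actions : ∀ (i : Fin n) (j : ℕ), j < m i → ∀ h ∈ Info i j, ∀ h' ∈ Info i j,
    ∀ a : ℕ, (h ++ [a] ∈ H ↔ h' ++ [a] ∈ H)
  act_unique : ∀ (h h' : List ℕ) (a : ℕ), h ∈ H → h' ∈ H → h ++ [a] ∈ H → h' ++ [a] ∈ H →
    P h = P h' ∧ infoIdx h = infoIdx h'

namespace EFG

/-- Behavioral strategy profiles (player, information-set index, action ↦ probability). -/
abbrev Profile (G : EFG) : Type := Fin G.n → ℕ → ℕ → ℝ

/-- Belief systems (player, information-set index, history ↦ probability). -/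
abbrev Belief (G : EFG) : Type := Fin G.n → ℕ → List ℕ → ℝ

variable (G : EFG)

/-- The set `Z` of terminal histories. -/
def Zset : Finset (List ℕ) := G.H.filter fun h => ∀ a : ℕ, h ++ [a] ∉ G.H

/-- The set `A(h)` of actions available after a history. -/
def A (h : List ℕ) : Finset ℕ := G.actFinset.filter fun a => h ++ [a] ∈ G.H

/-- The common action set `A(I_i^j)` of an information set. -/
def infoA (i : Fin G.n) (j : ℕ) : Finset ℕ := (G.Info i j).sup fun h => G.A h

/-- A behavioral strategy of player `i`: a probability distribution on `A(I_i^j)` for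
each information set `I_i^j`. -/
def IsBehStrategy (i : Fin G.n) (b : ℕ → ℕ → ℝ) : Prop :=
  ∀ j < G.m i, (∀ a ∈ G.infoA i j, 0 ≤ b j a) ∧ ∑ a ∈ G.infoA i j, b j a = 1

/-- A behavioral strategy profile. -/
def IsBehProfile (β : G.Profile) : Prop := ∀ i : Fin G.n, G.IsBehStrategy i (β i)

/-- The probability of action `a` at history `h`: the chance distribution if the chance
player moves, and the mover's behavioral strategy otherwise. -/
def moveProb (β : G.Profile) (h : List ℕ) (a : ℕ) : ℝ :=
  (G.P h).elim (G.fc h a) fun i => β i (G.infoIdx h) a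

/-- Player `i`'s record `X_i` of the information sets he encounters along a history and the
actions he takes at them, accumulated starting from the prefix `pre`. -/
def recordFrom (i : Fin G.n) : List ℕ → List ℕ → List (ℕ × ℕ)
  | _, [] => []
  | pre, b :: rest =>
    (if G.P pre = some i then [(G.infoIdx pre, b)] else []) ++ recordFrom i (pre ++ [b]) rest

/-- Perfect recall. -/
def PerfectRecall : Prop :=
  ∀ (i : Fin G.n) (j : ℕ), j < G.m i →
    ∀ h ∈ G.Info i j, ∀ h' ∈ G.Info i j, G.recordFrom i [] h = G.recordFrom i [] h'

/-- Product of the move probabilities along `rest`, continuing from the prefix `pre`. -/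
def prodAlong (β : G.Profile) : List ℕ → List ℕ → ℝ
  | _, [] => 1
  | pre, b :: rest => G.moveProb β pre b * prodAlong β (pre ++ [b]) rest

/-- `ω(h|β)`: the probability that the moves along `h` are played under `β`. -/
def omega (β : G.Profile) (h : List ℕ) : ℝ := G.prodAlong β [] h

/-- `ω(I_i^j|β)`. -/
def omegaInfo (i : Fin G.n) (j : ℕ) (β : G.Profile) : ℝ := ∑ h ∈ G.Info i j, G.omega β h

/-- Product of the move probabilities along `rest` from `pre`, disregarding player `i`'s
own moves. -/
def prodAlongNot (i : Fin G.n) (β : G.Profile) : List ℕ → List ℕ → ℝ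
  | _, [] => 1
  | pre, b :: rest =>
    (if G.P pre = some i then 1 else G.moveProb β pre b) * prodAlongNot i β (pre ++ [b]) rest

/-- `S^i(h|β)`: probability of the moves along `h`, disregarding player `i`'s own moves. -/
def Sh (i : Fin G.n) (β : G.Profile) (h : List ℕ) : ℝ := G.prodAlongNot i β [] h

/-- `S^i(I_i^j|β)`. -/
def SInfo (i : Fin G.n) (j : ℕ) (β : G.Profile) : ℝ := ∑ h ∈ G.Info i j, G.Sh i β h

/-- Product of the move probabilities along `rest` from `pre`, with the factor at prefixes
lying in `I_i^j` omitted. -/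
def prodAlongSkip (i : Fin G.n) (j : ℕ) (β : G.Profile) : List ℕ → List ℕ → ℝ
  | _, [] => 1
  | pre, b :: rest =>
    (if pre ∈ G.Info i j then 1 else G.moveProb β pre b) * prodAlongSkip i j β (pre ++ [b]) rest

/-- `q ∈ M(a, I_i^j)`: `I_i^q` is a first information set of player `i` after action `a`
(every history in `I_i^q` contains `a`, with no later action of `a` lying in any action set
of player `i`). -/
def FirstAfter (i : Fin G.n) (a : ℕ) (q : ℕ) : Prop :=
  q < G.m i ∧ ∀ h ∈ G.Info i q, ∃ l₁ l₂ : List ℕ,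
    h = l₁ ++ a :: l₂ ∧ ∀ b ∈ l₂, ∀ p < G.m i, b ∉ G.infoA i p

/-- `q ∈ M(I_i^j) = ∪_{a ∈ A(I_i^j)} M(a, I_i^j)`. -/
def MInfo (i : Fin G.n) (j : ℕ) (q : ℕ) : Prop := ∃ a ∈ G.infoA i j, G.FirstAfter i a q

/-- `q ∈ Λ(a, I_i^j)`: every history in `I_i^q` contains the action `a`. -/
def LambdaSet (i : Fin G.n) (a : ℕ) (q : ℕ) : Prop :=
  q < G.m i ∧ ∀ h ∈ G.Info i q, ∃ l₁ l₂ : List ℕ, h = l₁ ++ a :: l₂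

/-- `ϱ^i_{I_i^j}(β, β̃)`: replace player `i`'s component of `β` by that of `β̃` at every
information set `I_i^q` such that some history in `I_i^q` contains an action of `A(I_i^j)`. -/
def rho (i : Fin G.n) (j : ℕ) (β βt : G.Profile) : G.Profile := fun p q =>
  if p = i ∧ ∃ h ∈ G.Info i q, ∃ b ∈ h, b ∈ G.infoA i j then βt i q else β p q

/-- A belief system: a probability distribution on each information set. -/
def IsBelief (μ : G.Belief) : Prop :=
  ∀ (i : Fin G.n) (j : ℕ), j < G.m i →
    (∀ h ∈ G.Info i j, 0 ≤ μ i j h) ∧ ∑ h ∈ G.Info i j, μ i j h = 1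

/-- A self-independent belief system for `β`:
`S^i(I_i^j|β) · μ^i_{I_i^j}(h) = S^i(h|β)`. -/
def SelfIndep (β : G.Profile) (μ : G.Belief) : Prop :=
  ∀ (i : Fin G.n) (j : ℕ), j < G.m i → ∀ h ∈ G.Info i j,
    G.SInfo i j β * μ i j h = G.Sh i β h

/-- Auxiliary for `ν`: scan `rest` from `pre` for the subhistory lying in `I_i^j`, then
weight by the belief and multiply the move probabilities of the remaining moves (the move
taken at the subhistory itself being skipped). -/
def nuAux (i : Fin G.n) (j : ℕ) (β : G.Profile) (w : List ℕ → ℝ) : List ℕ → List ℕ → ℝ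
  | _, [] => 0
  | pre, b :: rest =>
    if pre ∈ G.Info i j then w pre * G.prodAlong β (pre ++ [b]) rest
    else nuAux i j β w (pre ++ [b]) rest

/-- `ν^i_{I_i^j}(h | a, β^{-I_i^j}, μ)` (it does not involve the component of `β` at
`I_i^j`). -/
def nu (i : Fin G.n) (j : ℕ) (β : G.Profile) (μ : G.Belief) (h : List ℕ) : ℝ :=
  G.nuAux i j β (μ i j) [] h

/-- `u^i((a, β^{-I_i^j}) ∧ I_i^j)`. -/
def uWedgeAct (i : Fin G.n) (j : ℕ) (a : ℕ) (β : G.Profile) : ℝ :=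
  ∑ h ∈ G.Zset.filter (fun h => a ∈ h), G.u i h * G.prodAlongSkip i j β [] h

/-- `u^i(β ∧ I_i^j)`. -/
def uWedge (i : Fin G.n) (j : ℕ) (β : G.Profile) : ℝ :=
  ∑ h ∈ G.Zset.filter (fun h => ∃ b ∈ h, b ∈ G.infoA i j), G.u i h * G.omega β h

/-- The conditional expected payoff `u^i(a, β^{-I_i^j}, μ | I_i^j)`. -/
def uCond (i : Fin G.n) (j : ℕ) (a : ℕ) (β : G.Profile) (μ : G.Belief) : ℝ :=
  ∑ h ∈ G.Zset.filter (fun h => a ∈ h), G.u i h * G.nu i j β μ h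

/-- The expected payoff `u^i(β)`. -/
def uExp (i : Fin G.n) (β : G.Profile) : ℝ := ∑ h ∈ G.Zset, G.u i h * G.omega β h

/-- The profile obtained from `β` by replacing all of player `i`'s components by `b`. -/
def replace (β : G.Profile) (i : Fin G.n) (b : ℕ → ℕ → ℝ) : G.Profile :=
  fun p => if p = i then b else β p

/-- `β` is a Nash equilibrium in behavioral strategies. -/
def IsNash (β : G.Profile) : Prop :=
  G.IsBehProfile β ∧ ∀ (i : Fin G.n) (b : ℕ → ℕ → ℝ), G.IsBehStrategy i b →
    G.uExp i (G.replace β i b) ≤ G.uExp i β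

/-- `(β, β̃, μ)` satisfies the Nash characterization (Definition 2 of the paper). -/
def NashChar (β βt : G.Profile) (μ : G.Belief) : Prop :=
  (∀ (i : Fin G.n) (j : ℕ), j < G.m i → ∀ a' ∈ G.infoA i j, ∀ a'' ∈ G.infoA i j,
    G.uWedgeAct i j a' (G.rho i j β βt) < G.uWedgeAct i j a'' (G.rho i j β βt) →
    β i j a' = 0) ∧
  (∀ (i : Fin G.n) (j : ℕ), j < G.m i → ∀ a' ∈ G.infoA i j, ∀ a'' ∈ G.infoA i j,
    G.uCond i j a' (G.rho i j β βt) μ < G.uCond i j a'' (G.rho i j β βt) μ →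
    βt i j a' = 0) ∧
  G.IsBelief μ ∧ G.SelfIndep β μ

/-- `r` is the root of a subgame: every information set lies entirely inside or entirely
outside the set of histories extending `r`. -/
def IsSubgameRoot (r : List ℕ) : Prop :=
  r ∈ G.H ∧ ∀ (i : Fin G.n) (j : ℕ), j < G.m i →
    (∀ h ∈ G.Info i j, r <+: h) ∨ ∀ h ∈ G.Info i j, ¬ r <+: h

/-- The depth `g` of the smallest subgame containing `A(I_i^j)` (the length of the longest
subgame root preceding every history of `I_i^j`). -/
def sgDepthInfo (i : Fin G.n) (j : ℕ) : ℕ :=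
  (G.H.filter fun r => G.IsSubgameRoot r ∧ ∀ h ∈ G.Info i j, r <+: h).sup List.length

/-- The depth `q(h)` of the smallest subgame containing the last action of `h`. -/
def sgDepthHist (h : List ℕ) : ℕ :=
  (G.H.filter fun r => G.IsSubgameRoot r ∧ r <+: h.dropLast).sup List.length

/-- `C^i_{I_i^j}(h|β)`: product of move probabilities along `h` within the smallest subgame
containing `A(I_i^j)`. -/
def Ch (i : Fin G.n) (j : ℕ) (β : G.Profile) (h : List ℕ) : ℝ :=
  G.prodAlong β (h.take (G.sgDepthInfo i j)) (h.drop (G.sgDepthInfo i j))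

/-- `C^i_{I_i^j}(I_i^j|β)`. -/
def CInfo (i : Fin G.n) (j : ℕ) (β : G.Profile) : ℝ := ∑ h ∈ G.Info i j, G.Ch i j β h

/-- `u^i((a, β^{-I_i^j}) ⋄ I_i^j)`. -/
def uDiamondAct (i : Fin G.n) (j : ℕ) (a : ℕ) (β : G.Profile) : ℝ :=
  ∑ h ∈ G.Zset.filter (fun h => a ∈ h), G.u i h *
    G.prodAlongSkip i j β (h.take (G.sgDepthInfo i j)) (h.drop (G.sgDepthInfo i j))

/-- `Y^i(h|β)`: like `S^i(h|β)` but within the smallest subgame containing the last action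
of `h`. -/
def Yh (i : Fin G.n) (β : G.Profile) (h : List ℕ) : ℝ :=
  G.prodAlongNot i β (h.take (G.sgDepthHist h)) (h.drop (G.sgDepthHist h))

/-- `Y^i(I_i^j|β)`. -/
def YInfo (i : Fin G.n) (j : ℕ) (β : G.Profile) : ℝ := ∑ h ∈ G.Info i j, G.Yh i β h

/-- The belief condition `Y^i(I_i^j|β) · μ^i_{I_i^j}(h) = Y^i(h|β)`. -/
def YConsistent (β : G.Profile) (μ : G.Belief) : Prop :=
  ∀ (i : Fin G.n) (j : ℕ), j < G.m i → ∀ h ∈ G.Info i j,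
    G.YInfo i j β * μ i j h = G.Yh i β h

/-- The expected payoff of player `i` in the subgame rooted at `r` (payoffs of terminal
histories extending `r`, weighted by the move probabilities within the subgame). -/
def uExpFrom (i : Fin G.n) (β : G.Profile) (r : List ℕ) : ℝ :=
  ∑ h ∈ G.Zset.filter (fun h => r <+: h), G.u i h * G.prodAlong β r (h.drop r.length)

/-- `β` is a subgame perfect equilibrium in behavioral strategies: its restriction to every
subgame is a Nash equilibrium in behavioral strategies of that subgame. -/
def IsSubgamePerfect (β : G.Profile) : Prop :=
  G.IsBehProfile β ∧ ∀ r : List ℕ, G.IsSubgameRoot r →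
    ∀ (i : Fin G.n) (b : ℕ → ℕ → ℝ), G.IsBehStrategy i b →
      G.uExpFrom i (G.replace β i b) r ≤ G.uExpFrom i β r

/-- `(β, β̃, μ)` satisfies the subgame perfect characterization (Definition 6 of the
paper). -/
def SubgameChar (β βt : G.Profile) (μ : G.Belief) : Prop :=
  (∀ (i : Fin G.n) (j : ℕ), j < G.m i → ∀ a' ∈ G.infoA i j, ∀ a'' ∈ G.infoA i j,
    G.uDiamondAct i j a' (G.rho i j β βt) < G.uDiamondAct i j a'' (G.rho i j β βt) →
    β i j a' = 0) ∧
  (∀ (i : Fin G.n) (j : ℕ), j < G.m i → ∀ a' ∈ G.infoA i j, ∀ a'' ∈ G.infoA i j,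
    G.uCond i j a' (G.rho i j β βt) μ < G.uCond i j a'' (G.rho i j β βt) μ →
    βt i j a' = 0) ∧
  G.IsBelief μ ∧ G.YConsistent β μ

/-- `(β, μ)` is a semi-sequential equilibrium. -/
def SemiSeqEq (β : G.Profile) (μ : G.Belief) : Prop :=
  G.IsBehProfile β ∧ G.IsBelief μ ∧ G.SelfIndep β μ ∧
  ∀ (i : Fin G.n) (j : ℕ), j < G.m i → ∀ a' ∈ G.infoA i j, ∀ a'' ∈ G.infoA i j,
    G.uCond i j a' β μ < G.uCond i j a'' β μ → β i j a' = 0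

/-- `(β, μ)` is a subgame perfect semi-sequential equilibrium. -/
def SubgameSemiSeqEq (β : G.Profile) (μ : G.Belief) : Prop :=
  G.IsBehProfile β ∧ G.IsBelief μ ∧ G.YConsistent β μ ∧
  ∀ (i : Fin G.n) (j : ℕ), j < G.m i → ∀ a' ∈ G.infoA i j, ∀ a'' ∈ G.infoA i j,
    G.uCond i j a' β μ < G.uCond i j a'' β μ → β i j a' = 0

/-- `d(I_i^j)`: the number of information sets of player `i` containing a prefix of some
history of `I_i^j` (counting `I_i^j` itself). -/
def dInfo (i : Fin G.n) (j : ℕ) : ℕ :=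
  ((Finset.range (G.m i)).filter
    (fun q => ∃ h ∈ G.Info i j, ∃ p : List ℕ, p <+: h ∧ p ∈ G.Info i q)).card

end EFG

/-! Each history of `I_i^q`, `q ∈ M(I_i^j)`, contains an action of `A(I_i^j)`. An action is
available only at the histories of a single information set, so the part of the history before it
lies in `I_i^j`. Since `S^i(h|β)` is a product along `h`, it vanishes as soon as it vanishes at a
prefix of `h`; hence `S^i(I_i^j|β) = 0`, a vanishing sum of nonnegative terms, forces
`S^i(I_i^q|β) = 0`. By nonnegativity, (i) is the contrapositive of (ii). -/

namespace EFG

variable {G : EFG} {β : G.Profile} {i : Fin G.n} {j q : ℕ}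

theorem mem_A {h : List ℕ} {a : ℕ} : a ∈ G.A h ↔ h ++ [a] ∈ G.H := by
  simpa only [A, Finset.mem_filter, and_iff_right_iff_imp] using G.act_mem h a

theorem mem_infoA {a : ℕ} : a ∈ G.infoA i j ↔ ∃ h ∈ G.Info i j, h ++ [a] ∈ G.H := by
  simp only [infoA, Finset.mem_sup, mem_A]

theorem mem_Info_infoIdx {h : List ℕ} {a : ℕ} (ha : h ++ [a] ∈ G.H) (hP : G.P h = some i) :
    h ∈ G.Info i (G.infoIdx h) := by
  have hh : h ∈ G.H := G.prefixClosed _ ha _ (List.prefix_append _ _)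
  exact (G.info_spec i _ h (G.infoIdx_lt i h hh hP ⟨a, ha⟩)).2 ⟨hh, hP, ⟨a, ha⟩, rfl⟩

theorem mem_Info_of_mem_infoA (hj : j < G.m i) {h : List ℕ} {a : ℕ} (ha : h ++ [a] ∈ G.H)
    (haj : a ∈ G.infoA i j) : h ∈ G.Info i j := by
  obtain ⟨h', hh', ha'⟩ := mem_infoA.1 haj
  obtain ⟨hH', hP', -, rfl⟩ := (G.info_spec i j h' hj).1 hh'
  have hH : h ∈ G.H := G.prefixClosed _ ha _ (List.prefix_append _ _)
  obtain ⟨hP, hidx⟩ := G.act_unique h h' a hH hH' ha ha'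
  exact (G.info_spec i _ h hj).2 ⟨hH, hP.trans hP', ⟨a, ha⟩, hidx⟩

variable (G i j q) in
/-- `I_i^j` precedes `I_i^q`: every history of `I_i^q` has a prefix in `I_i^j`. This weakens
`q ∈ M(I_i^j)`: the action taken at the prefix may depend on the history, further moves of player
`i` may come in between, and the prefix need not be proper. -/
def InfoPrecedes : Prop := ∀ h ∈ G.Info i q, ∃ p ∈ G.Info i j, p <+: h

theorem MInfo.infoPrecedes (hq : G.MInfo i j q) (hj : j < G.m i) : G.InfoPrecedes i j q := by
  intro h hh
  obtain ⟨a, ha, hqm, hfirst⟩ := hq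
  obtain ⟨p, l, rfl, -⟩ := hfirst h hh
  have hH : p ++ a :: l ∈ G.H := ((G.info_spec i q _ hqm).1 hh).1
  have hpa : p ++ [a] ∈ G.H := G.prefixClosed _ hH _ ⟨l, by simp⟩
  exact ⟨p, mem_Info_of_mem_infoA hj hpa ha, List.prefix_append _ _⟩

theorem prodAlongNot_append (pre l l' : List ℕ) :
    G.prodAlongNot i β pre (l ++ l') =
      G.prodAlongNot i β pre l * G.prodAlongNot i β (pre ++ l) l' := by
  induction l generalizing pre with
  | nil => simp [prodAlongNot]
  | cons b l ih => simp [prodAlongNot, ih, mul_assoc]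

theorem Sh_eq_zero_of_prefix {p h : List ℕ} (hp : G.Sh i β p = 0) (hph : p <+: h) :
    G.Sh i β h = 0 := by
  obtain ⟨l, rfl⟩ := hph
  rw [Sh] at hp ⊢
  rw [prodAlongNot_append, hp, zero_mul]

theorem moveProb_nonneg {h : List ℕ} {a : ℕ} (ha : h ++ [a] ∈ G.H)
    (hβ : ∀ k, G.P h = some k → G.IsBehStrategy k (β k)) : 0 ≤ G.moveProb β h a := by
  unfold moveProb
  cases hP : G.P h with
  | none => exact G.fc_nonneg h a
  | some k =>
    have hh : h ∈ G.H := G.prefixClosed _ ha _ (List.prefix_append _ _)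
    have hlt : G.infoIdx h < G.m k := G.infoIdx_lt k h hh hP ⟨a, ha⟩
    exact (hβ k hP _ hlt).1 a (mem_infoA.2 ⟨h, mem_Info_infoIdx ha hP, ha⟩)

theorem prodAlongNot_nonneg (hβ : ∀ k ≠ i, G.IsBehStrategy k (β k)) {pre rest : List ℕ}
    (h : pre ++ rest ∈ G.H) : 0 ≤ G.prodAlongNot i β pre rest := by
  induction rest generalizing pre with
  | nil => exact zero_le_one
  | cons b rest ih =>
    have h' : (pre ++ [b]) ++ rest ∈ G.H := by simpa using h
    refine mul_nonneg ?_ (ih h')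
    split_ifs with hP
    · exact zero_le_one
    · have hb : pre ++ [b] ∈ G.H := G.prefixClosed _ h' _ (List.prefix_append _ _)
      exact moveProb_nonneg hb fun k hk => hβ k fun hki => hP (hki ▸ hk)

theorem Sh_nonneg_of_mem_Info (hβ : ∀ k ≠ i, G.IsBehStrategy k (β k)) (hj : j < G.m i)
    {h : List ℕ} (hh : h ∈ G.Info i j) : 0 ≤ G.Sh i β h :=
  prodAlongNot_nonneg hβ ((G.info_spec i j h hj).1 hh).1

theorem SInfo_nonneg (hβ : ∀ k ≠ i, G.IsBehStrategy k (β k)) (hj : j < G.m i) :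
    0 ≤ G.SInfo i j β :=
  Finset.sum_nonneg fun _ => Sh_nonneg_of_mem_Info hβ hj

theorem SInfo_eq_zero_iff (hβ : ∀ k ≠ i, G.IsBehStrategy k (β k)) (hj : j < G.m i) :
    G.SInfo i j β = 0 ↔ ∀ h ∈ G.Info i j, G.Sh i β h = 0 :=
  Finset.sum_eq_zero_iff_of_nonneg fun _ => Sh_nonneg_of_mem_Info hβ hj

theorem InfoPrecedes.SInfo_eq_zero (hq : G.InfoPrecedes i j q)
    (hβ : ∀ k ≠ i, G.IsBehStrategy k (β k)) (hj : j < G.m i) (h0 : G.SInfo i j β = 0) :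
    G.SInfo i q β = 0 := by
  refine Finset.sum_eq_zero fun h hh => ?_
  obtain ⟨p, hp, hph⟩ := hq h hh
  exact Sh_eq_zero_of_prefix ((SInfo_eq_zero_iff hβ hj).1 h0 p hp) hph

end EFG

theorem stmt0_general (G : EFG) (β : G.Profile) (i : Fin G.n)
    (hβ : ∀ k ≠ i, G.IsBehStrategy k (β k)) (j : ℕ) (hj : j < G.m i) :
    ((∃ q, G.InfoPrecedes i j q ∧ 0 < G.SInfo i q β) → 0 < G.SInfo i j β) ∧
    (G.SInfo i j β = 0 → ∀ q, G.InfoPrecedes i j q → G.SInfo i q β = 0) := by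
  refine ⟨?_, fun h0 q hq => hq.SInfo_eq_zero hβ hj h0⟩
  rintro ⟨q, hq, hpos⟩
  exact (EFG.SInfo_nonneg hβ hj).lt_of_ne' fun h0 => hpos.ne' (hq.SInfo_eq_zero hβ hj h0)

/-- Lemma 1 (i)–(ii): if some first subsequent information set `I_i^q`, `q ∈ M(I_i^j)`, has
`S^i(I_i^q|β) > 0` then `S^i(I_i^j|β) > 0`; and if `S^i(I_i^j|β) = 0` then
`S^i(I_i^q|β) = 0` for all `q ∈ M(I_i^j)`. -/
theorem stmt0 (G : EFG) (hPR : G.PerfectRecall)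
    (β : G.Profile) (hβ : G.IsBehProfile β)
    (i : Fin G.n) (j : ℕ) (hj : j < G.m i) :
    ((∃ q, G.MInfo i j q ∧ 0 < G.SInfo i q β) → 0 < G.SInfo i j β) ∧
    (G.SInfo i j β = 0 → ∀ q, G.MInfo i j q → G.SInfo i q β = 0) := by
  have ⟨pos, zero⟩ := stmt0_general G β i (fun k _ => hβ k) j hj
  exact ⟨fun ⟨q, hq, h⟩ => pos ⟨q, hq.infoPrecedes hj, h⟩,
    fun h q hq => zero h q (hq.infoPrecedes hj)⟩
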